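/- (Fundamental Lemma.) Consider the noise-free LTI system x_{t+1} = A x_t + B u_t, y_t = C x_t + D u_t, and assume the pair (A,B) is controllable, i.e. rank [B, AB, …, A^{n_x−1}B] = n_x. Let (u^s_t, y^s_t)_{t=0}^{N−1} be an input-output trajectory of this system and suppose the input sequence u^s is persistently exciting of order L + n_x. Then a pair of sequences (ū_t, ȳ_t)_{t=0}^{L−1} is an input-output trajectory of the system (i.e., there is a state sequence x̄_0,…,x̄_{L−1} with x̄_{t+1} = A x̄_t + B ū_t and ȳ_t = C x̄_t + D ū_t) if and only if there exists g ∈ ℝ^{N−L+1} such that H_L(u^s) g = ū and H_L(y^s) g = ȳ, where ū, ȳ denote the stacked vectors of the sequences. -/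

import Mathlib

/-- Block Hankel matrix with `L` block rows and `cols` columns built from the
`ℝ^m`-valued sequence `z`: the `((i,a), j)` entry is `z (i + j) a`. -/
def hankel {m : ℕ} (L cols : ℕ) (z : ℕ → Fin m → ℝ) :
    Matrix (Fin L × Fin m) (Fin cols) ℝ :=
  Matrix.of fun p j => z ((p.1 : ℕ) + (j : ℕ)) p.2

/-- A sequence of length `N` is persistently exciting of order `L` if its block Hankel
matrix with `L` block rows has full row rank `m * L`. -/
def persistentlyExciting {m : ℕ} (N L : ℕ) (z : ℕ → Fin m → ℝ) : Prop :=
  (hankel L (N - L + 1) z).rank = m * L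

/-- The controllability matrix `[B, AB, …, A^{n_x−1}B]`. -/
def ctrbMat {nx nu : ℕ} (A : Matrix (Fin nx) (Fin nx) ℝ) (B : Matrix (Fin nx) (Fin nu) ℝ) :
    Matrix (Fin nx) (Fin nx × Fin nu) ℝ :=
  Matrix.of fun i p => (A ^ (p.1 : ℕ) * B) i p.2

/-!
A linear relation `ξ x_j + ∑ η_i u_{j+i} = 0` valid along the data gives, by the state equation,
relations `ξ A^k x_j + (inputs) = 0`. Combining these for `k ≤ d` with the coefficients of a monic
polynomial of degree `d` annihilating `A` cancels the state and leaves a relation among `L + d`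
consecutive inputs, whose coefficients vanish by persistency of excitation. These coefficients
satisfy a monic recurrence; run backwards from the zeros beyond index `L`, it gives `η = 0` and
then `ξ A^i B = 0` for `i < d`, so `ξ = 0` by controllability. Hence the data windows, combined
linearly, realise every initial state together with every input, and superposition does the rest.
-/

open Finset Function Matrix Polynomial

section FullRowRank

variable {K ι κ : Type*} [Field K] [Fintype ι] [Fintype κ]

theorem rank_eq_card_iff_vecMul_injective (M : Matrix ι κ K) :
    M.rank = Fintype.card ι ↔ Injective M.vecMul := by
  rw [vecMul_injective_iff, linearIndependent_iff_card_eq_finrank_span,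
    rank_eq_finrank_span_row, Set.finrank, eq_comm]

theorem eq_zero_of_rank_eq_card_of_vecMul_eq_zero {M : Matrix ι κ K} (hM : M.rank = Fintype.card ι)
    {v : ι → K} (hv : v ᵥ* M = 0) : v = 0 :=
  (rank_eq_card_iff_vecMul_injective M).1 hM (hv.trans (zero_vecMul M).symm)

theorem mulVec_surjective_of_rank_eq_card {M : Matrix ι κ K} (hM : M.rank = Fintype.card ι) :
    Surjective M.mulVec := by
  have hrange : LinearMap.range M.mulVecLin = ⊤ := by
    apply Submodule.eq_top_of_finrank_eq
    rw [Module.finrank_fintype_fun_eq_card]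
    exact hM
  exact LinearMap.range_eq_top.1 hrange

end FullRowRank

section BlockHankel

/-- The block Hankel matrix of `hankel`, with entries in an arbitrary type. -/
def blockHankel {R ι : Type*} (L q : ℕ) (z : ℕ → ι → R) : Matrix (Fin L × ι) (Fin q) R :=
  of fun p j => z (p.1 + j) p.2

/-- The linear combination, with weights `g`, of the first translates of the sequence `z`.
The vector `blockHankel L q z *ᵥ g` stacks its first `L` terms. -/
def shiftCombination {R V : Type*} [Semiring R] [AddCommMonoid V] [Module R V] {q : ℕ}
    (g : Fin q → R) (z : ℕ → V) (t : ℕ) : V :=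
  ∑ j, g j • z (t + j)

variable {R ι κ n : Type*} [CommSemiring R] {L q : ℕ}

theorem blockHankel_mulVec_apply (z : ℕ → ι → R) (g : Fin q → R) (p : Fin L × ι) :
    (blockHankel L q z *ᵥ g) p = shiftCombination g z p.1 p.2 := by
  simp only [blockHankel, shiftCombination, mulVec, dotProduct, of_apply, Finset.sum_apply,
    Pi.smul_apply, smul_eq_mul, mul_comm]

theorem blockHankel_mulVec_eq_iff {z w : ℕ → ι → R} {g : Fin q → R} :
    (blockHankel L q z *ᵥ g = fun p => w p.1 p.2) ↔ ∀ t < L, shiftCombination g z t = w t := by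
  simp only [funext_iff, blockHankel_mulVec_apply, Prod.forall, Fin.forall_iff]

theorem vecMul_blockHankel [Fintype ι] (θ : ℕ → ι → R) (z : ℕ → ι → R) (j : Fin q) :
    ((fun p : Fin L × ι => θ p.1 p.2) ᵥ* blockHankel L q z) j =
      ∑ i ∈ range L, θ i ⬝ᵥ z (j + i) := by
  simp only [Finset.sum_range, vecMul, dotProduct, Fintype.sum_prod_type, blockHankel, of_apply,
    add_comm (j : ℕ)]

theorem shiftCombination_eq_mulVec_add_mulVec [Fintype n] [Fintype ι] {P : Matrix κ n R}
    {Q : Matrix κ ι R} {x : ℕ → n → R} {u : ℕ → ι → R} {z : ℕ → κ → R} {N : ℕ}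
    (hz : ∀ t < N, z t = P *ᵥ x t + Q *ᵥ u t) (g : Fin q → R) {t : ℕ} (ht : t + q ≤ N) :
    shiftCombination g z t = P *ᵥ shiftCombination g x t + Q *ᵥ shiftCombination g u t := by
  simp only [shiftCombination, mulVec_sum, mulVec_smul, ← sum_add_distrib, ← smul_add]
  exact sum_congr rfl fun j _ => by rw [hz _ (by omega)]

/-- Persistency of excitation of order `M` of the first `N` terms of a sequence over an arbitrary
field, as `persistentlyExciting` over `ℝ`. Meaningful for `M ≤ N`, since `N - M` is truncated. -/
def IsPersistentlyExciting {K : Type*} [Field K] [Fintype ι] (N M : ℕ) (u : ℕ → ι → K) : Prop :=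
  (blockHankel M (N - M + 1) u).rank = Fintype.card ι * M

theorem IsPersistentlyExciting.eq_zero_of_sum_dotProduct_eq_zero {K : Type*} [Field K] [Fintype ι]
    {N M : ℕ} {u : ℕ → ι → K} (hu : IsPersistentlyExciting N M u) {θ : ℕ → ι → K}
    (hθ : ∀ j < N - M + 1, ∑ i ∈ range M, θ i ⬝ᵥ u (j + i) = 0) {i : ℕ} (hi : i < M) : θ i = 0 := by
  have hrank : (blockHankel M (N - M + 1) u).rank = Fintype.card (Fin M × ι) := by
    simpa [IsPersistentlyExciting, mul_comm] using hu
  have hzero : (fun p : Fin M × ι => θ p.1 p.2) = 0 :=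
    eq_zero_of_rank_eq_card_of_vecMul_eq_zero hrank
      (funext fun j => (vecMul_blockHankel θ u j).trans (hθ j j.2))
  exact funext fun a => congrFun hzero (⟨i, hi⟩, a)

end BlockHankel

section BackwardRecurrence

theorem eq_zero_of_monic_recurrence {R V : Type*} [Semiring R] [AddCommMonoid V] [Module R V]
    {f : R[X]} (hf : f.Monic) {ω : ℤ → V} {a b : ℤ}
    (hrec : ∀ i, a ≤ i → i < b →
      ∑ k ∈ range (f.natDegree + 1), f.coeff k • ω (i + f.natDegree - k) = 0)
    (hω : ∀ i, b ≤ i → ω i = 0) {i : ℤ} (hi : a ≤ i) : ω i = 0 := by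
  suffices H : ∀ (s : ℕ) (i : ℤ), a ≤ i → b ≤ i + s → ω i = 0 from
    H (b - i).toNat i hi (by omega)
  intro s
  induction s with
  | zero => exact fun i _ hbi => hω i (by simpa using hbi)
  | succ s ih =>
    intro i hai hbi
    obtain hib | hib := lt_or_ge i b
    · have hlater : ∀ k ∈ range f.natDegree, f.coeff k • ω (i + f.natDegree - k) = 0 := by
        intro k hk
        have hk := mem_range.1 hk
        rw [ih _ (by omega) (by omega), smul_zero]
      simpa [sum_range_succ, sum_eq_zero hlater, hf.coeff_natDegree] using hrec i hai hib
    · exact hω i hib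

end BackwardRecurrence

section StateTrajectory

variable {R n m : Type*} [Fintype n] [Fintype m]

/-- The sequence `x` satisfies the state equation with input `u` at all transitions between the
times `0, …, N - 1`. -/
def IsStateTrajectory [NonUnitalNonAssocSemiring R] (A : Matrix n n R) (B : Matrix n m R) (N : ℕ)
    (u : ℕ → m → R) (x : ℕ → n → R) : Prop :=
  ∀ t, t + 1 < N → x (t + 1) = A *ᵥ x t + B *ᵥ u t

theorem IsStateTrajectory.eq_of_initial_eq [NonUnitalNonAssocSemiring R]
    {A : Matrix n n R} {B : Matrix n m R} {N : ℕ} {u u' : ℕ → m → R} {x x' : ℕ → n → R}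
    (hx : IsStateTrajectory A B N u x) (hx' : IsStateTrajectory A B N u' x')
    (hu : ∀ t < N, u t = u' t) (h₀ : x 0 = x' 0) {t : ℕ} (ht : t < N) : x t = x' t := by
  induction t with
  | zero => exact h₀
  | succ t ih => rw [hx t ht, hx' t ht, ih (by omega), hu t (by omega)]

protected theorem IsStateTrajectory.shiftCombination [CommSemiring R]
    {A : Matrix n n R} {B : Matrix n m R} {N L q : ℕ} {u : ℕ → m → R} {x : ℕ → n → R}
    (hx : IsStateTrajectory A B N u x) (g : Fin q → R) (hN : L + q ≤ N + 1) :
    IsStateTrajectory A B L (shiftCombination g u) (shiftCombination g x) := by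
  intro t ht
  have hnext : ∀ s < N - 1, x (s + 1) = A *ᵥ x s + B *ᵥ u s := fun s hs => hx s (by omega)
  rw [← shiftCombination_eq_mulVec_add_mulVec hnext g (by omega)]
  simp only [shiftCombination, add_right_comm]

end StateTrajectory

section Relations

variable {R n m : Type*} [CommSemiring R] [Fintype n] [DecidableEq n]

/-- The controllability matrix `[B, AB, …, A^(d-1) B]`. -/
def controllabilityMatrix (A : Matrix n n R) (B : Matrix n m R) (d : ℕ) :
    Matrix n (Fin d × m) R :=
  of fun i p => (A ^ (p.1 : ℕ) * B) i p.2

/-- The input coefficients of a linear relation `ξ ⬝ᵥ x j + ∑ i, η i ⬝ᵥ u (j + i) = 0`, continued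
to negative indices by the rows `ξ A^i B`: the relation at time `j + k`, rewritten in terms of
`x j` by the state equation, has coefficient `relationCoeff A B ξ η (i - k)` at `u (j + i)`. -/
def relationCoeff (A : Matrix n n R) (B : Matrix n m R) (ξ : n → R)
    (η : ℕ → m → R) : ℤ → m → R
  | .ofNat i => η i
  | .negSucc i => ξ ᵥ* (A ^ i * B)

variable [Fintype m] {A : Matrix n n R} {B : Matrix n m R} {N L : ℕ} {u : ℕ → m → R}
  {x : ℕ → n → R} {ξ : n → R} {η : ℕ → m → R}

theorem IsStateTrajectory.shifted_relation (hx : IsStateTrajectory A B N u x) (hL : 1 ≤ L)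
    (hrel : ∀ j, j + L ≤ N → ξ ⬝ᵥ x j + ∑ i ∈ range L, η i ⬝ᵥ u (j + i) = 0)
    (k : ℕ) {j : ℕ} (hj : j + k + L ≤ N) :
    ξ ᵥ* A ^ k ⬝ᵥ x j +
      ∑ i ∈ range (L + k), relationCoeff A B ξ η (i - k) ⬝ᵥ u (j + i) = 0 := by
  induction k generalizing j with
  | zero => simpa [relationCoeff] using hrel j hj
  | succ k ih =>
    have hfirst : relationCoeff A B ξ η ((0 : ℕ) - (k + 1 : ℕ)) = ξ ᵥ* (A ^ k * B) := by
      rw [show ((0 : ℕ) : ℤ) - (k + 1 : ℕ) = Int.negSucc k by omega, relationCoeff]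
    have hshift : ∀ i : ℕ, ((i + 1 : ℕ) : ℤ) - (k + 1 : ℕ) = i - k := fun i => by omega
    calc
      _ = ξ ᵥ* A ^ k ⬝ᵥ x (j + 1) +
          ∑ i ∈ range (L + k), relationCoeff A B ξ η (i - k) ⬝ᵥ u (j + 1 + i) := by
        rw [hx j (by omega), dotProduct_add, dotProduct_mulVec, dotProduct_mulVec,
          vecMul_vecMul, vecMul_vecMul, ← pow_succ, ← add_assoc L, sum_range_succ', hfirst]
        simp only [hshift, add_zero, add_assoc, add_comm 1]
        ring
      _ = 0 := ih (by omega)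

theorem IsStateTrajectory.padded_shifted_relation (hx : IsStateTrajectory A B N u x) (hL : 1 ≤ L)
    (hη : ∀ i, L ≤ i → η i = 0)
    (hrel : ∀ j, j + L ≤ N → ξ ⬝ᵥ x j + ∑ i ∈ range L, η i ⬝ᵥ u (j + i) = 0)
    {d k j : ℕ} (hk : k ≤ d) (hj : j + (L + d) ≤ N) :
    ξ ᵥ* A ^ k ⬝ᵥ x j +
      ∑ i ∈ range (L + d), relationCoeff A B ξ η (i - k) ⬝ᵥ u (j + i) = 0 := by
  have hpad : ∀ i ≥ L + k, relationCoeff A B ξ η (i - k) ⬝ᵥ u (j + i) = 0 := by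
    intro i hi
    rw [← Nat.cast_sub (by omega), ← Int.ofNat_eq_natCast, relationCoeff, hη _ (by omega),
      zero_dotProduct]
  rw [eventually_constant_sum hpad (by omega), hx.shifted_relation hL hrel k (by omega)]

theorem IsStateTrajectory.input_relation_of_aeval_eq_zero (hx : IsStateTrajectory A B N u x)
    (hL : 1 ≤ L) (hη : ∀ i, L ≤ i → η i = 0)
    (hrel : ∀ j, j + L ≤ N → ξ ⬝ᵥ x j + ∑ i ∈ range L, η i ⬝ᵥ u (j + i) = 0)
    {f : R[X]} (hfA : aeval A f = 0) {j : ℕ} (hj : j + (L + f.natDegree) ≤ N) :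
    ∑ i ∈ range (L + f.natDegree), (∑ k ∈ range (f.natDegree + 1),
      f.coeff k • relationCoeff A B ξ η (i - k)) ⬝ᵥ u (j + i) = 0 := by
  have hstate : ∑ k ∈ range (f.natDegree + 1), f.coeff k * (ξ ᵥ* A ^ k ⬝ᵥ x j) = 0 := by
    calc
      _ = ξ ᵥ* aeval A f ⬝ᵥ x j := by
        simp only [aeval_eq_sum_range, vecMul_sum, vecMul_smul, sum_dotProduct, smul_dotProduct,
          smul_eq_mul]
      _ = 0 := by rw [hfA, vecMul_zero, zero_dotProduct]
  calc
    _ = ∑ k ∈ range (f.natDegree + 1), f.coeff k * (ξ ᵥ* A ^ k ⬝ᵥ x j +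
          ∑ i ∈ range (L + f.natDegree), relationCoeff A B ξ η (i - k) ⬝ᵥ u (j + i)) := by
      simp only [mul_add, sum_add_distrib, hstate, zero_add, mul_sum, sum_dotProduct,
        smul_dotProduct, smul_eq_mul]
      exact sum_comm
    _ = 0 := sum_eq_zero fun k hk => by
      rw [hx.padded_shifted_relation hL hη hrel (mem_range_succ_iff.1 hk) hj, mul_zero]

end Relations

section FundamentalLemma

variable {K n m p : Type*} [Field K] [Fintype n] [DecidableEq n] [Fintype m]
  {A : Matrix n n K} {B : Matrix n m K} {N L : ℕ} {u : ℕ → m → K} {x : ℕ → n → K} {f : K[X]}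

theorem IsStateTrajectory.relationCoeff_eq_zero (hx : IsStateTrajectory A B N u x)
    (hL : 1 ≤ L) (hN : L + f.natDegree ≤ N) (hf : f.Monic) (hfA : aeval A f = 0)
    (hu : IsPersistentlyExciting N (L + f.natDegree) u)
    {ξ : n → K} {η : ℕ → m → K} (hη : ∀ i, L ≤ i → η i = 0)
    (hrel : ∀ j, j + L ≤ N → ξ ⬝ᵥ x j + ∑ i ∈ range L, η i ⬝ᵥ u (j + i) = 0)
    {i : ℤ} (hi : -f.natDegree ≤ i) : relationCoeff A B ξ η i = 0 := by
  refine eq_zero_of_monic_recurrence hf (a := -f.natDegree) (b := L)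
    (fun i hai hib => ?_) (fun i hLi => ?_) hi
  · have hcoeff := hu.eq_zero_of_sum_dotProduct_eq_zero
      (fun j hj => hx.input_relation_of_aeval_eq_zero hL hη hrel hfA (by omega))
      (show (i + f.natDegree).toNat < L + f.natDegree by omega)
    rwa [Int.toNat_of_nonneg (by omega)] at hcoeff
  · lift i to ℕ using by omega
    exact hη i (by omega)

theorem IsStateTrajectory.relation_trivial (hx : IsStateTrajectory A B N u x)
    (hL : 1 ≤ L) (hN : L + f.natDegree ≤ N) (hf : f.Monic) (hfA : aeval A f = 0)
    (hAB : (controllabilityMatrix A B f.natDegree).rank = Fintype.card n)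
    (hu : IsPersistentlyExciting N (L + f.natDegree) u)
    {ξ : n → K} {η : ℕ → m → K} (hη : ∀ i, L ≤ i → η i = 0)
    (hrel : ∀ j, j + L ≤ N → ξ ⬝ᵥ x j + ∑ i ∈ range L, η i ⬝ᵥ u (j + i) = 0) :
    ξ = 0 ∧ η = 0 := by
  have hcoeff {i : ℤ} (hi : -f.natDegree ≤ i) : relationCoeff A B ξ η i = 0 :=
    hx.relationCoeff_eq_zero hL hN hf hfA hu hη hrel hi
  refine ⟨eq_zero_of_rank_eq_card_of_vecMul_eq_zero hAB (funext fun ⟨k, a⟩ => ?_),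
    funext fun i => hcoeff (i := .ofNat i) (by simp)⟩
  exact congrFun (hcoeff (i := .negSucc k) (by omega)) a

theorem IsStateTrajectory.rank_state_input_data (hx : IsStateTrajectory A B N u x)
    (hL : 1 ≤ L) (hN : L + f.natDegree ≤ N) (hf : f.Monic) (hfA : aeval A f = 0)
    (hAB : (controllabilityMatrix A B f.natDegree).rank = Fintype.card n)
    (hu : IsPersistentlyExciting N (L + f.natDegree) u) :
    (fromRows (of fun i (j : Fin (N - L + 1)) => x j i) (blockHankel L (N - L + 1) u)).rank =
      Fintype.card (n ⊕ Fin L × m) := by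
  rw [rank_eq_card_iff_vecMul_injective, ← coe_vecMulLinear, injective_iff_map_eq_zero]
  intro v hv
  set η : ℕ → m → K := fun i a => if hi : i < L then v (.inr (⟨i, hi⟩, a)) else 0 with hη
  have hvη : v ∘ Sum.inr = fun q : Fin L × m => η q.1 q.2 := by
    ext q
    simp [hη]
  obtain ⟨hξ₀, hη₀⟩ : v ∘ Sum.inl = 0 ∧ η = 0 := by
    refine hx.relation_trivial hL hN hf hfA hAB hu
      (fun i hi => funext fun a => dif_neg (by omega)) fun j hj => ?_
    have hcol := congrFun hv ⟨j, by omega⟩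
    rwa [vecMulLinear_apply, vecMul_fromRows, hvη, Pi.add_apply, vecMul_blockHankel] at hcol
  rw [← Sum.elim_comp_inl_inr v, hξ₀, hvη, hη₀]
  exact Sum.elim_zero_zero

theorem IsStateTrajectory.exists_shiftCombination_eq (hx : IsStateTrajectory A B N u x)
    (hL : 1 ≤ L) (hN : L + f.natDegree ≤ N) (hf : f.Monic) (hfA : aeval A f = 0)
    (hAB : (controllabilityMatrix A B f.natDegree).rank = Fintype.card n)
    (hu : IsPersistentlyExciting N (L + f.natDegree) u)
    {u' : ℕ → m → K} {x' : ℕ → n → K} (hx' : IsStateTrajectory A B L u' x') :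
    ∃ g : Fin (N - L + 1) → K, ∀ t < L,
      shiftCombination g u t = u' t ∧ shiftCombination g x t = x' t := by
  obtain ⟨g, hg⟩ := mulVec_surjective_of_rank_eq_card
    (hx.rank_state_input_data hL hN hf hfA hAB hu)
    (Sum.elim (x' 0) fun q : Fin L × m => u' q.1 q.2)
  rw [fromRows_mulVec, Sum.elim_eq_iff] at hg
  obtain ⟨hg₀, hgu⟩ := hg
  have hinput := blockHankel_mulVec_eq_iff.1 hgu
  have hinit : shiftCombination g x 0 = x' 0 := by
    rw [← hg₀]
    ext i
    simp [shiftCombination, mulVec, dotProduct, mul_comm]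
  exact ⟨g, fun t ht => ⟨hinput t ht,
    (hx.shiftCombination g (by omega)).eq_of_initial_eq hx' hinput hinit ht⟩⟩

/-- For `f` the minimal polynomial of `A`, the order of excitation `L + d` may be smaller than the
classical `L + card n`, which is the case of the characteristic polynomial. -/
theorem stmt_2_general {d : ℕ} {C : Matrix p n K} {D : Matrix p m K} {y : ℕ → p → K}
    (hL : 1 ≤ L) (hN : L + d ≤ N) (hf : f.Monic) (hd : f.natDegree = d) (hfA : aeval A f = 0)
    (hAB : (controllabilityMatrix A B d).rank = Fintype.card n)
    (hx : IsStateTrajectory A B N u x)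
    (hy : ∀ t, t < N → y t = C *ᵥ x t + D *ᵥ u t)
    (hu : IsPersistentlyExciting N (L + d) u)
    (u' : ℕ → m → K) (y' : ℕ → p → K) :
    (∃ x' : ℕ → n → K, IsStateTrajectory A B L u' x' ∧
        ∀ t, t < L → y' t = C *ᵥ x' t + D *ᵥ u' t) ↔
      ∃ g : Fin (N - L + 1) → K,
        (blockHankel L (N - L + 1) u *ᵥ g = fun q => u' q.1 q.2) ∧
        blockHankel L (N - L + 1) y *ᵥ g = fun q => y' q.1 q.2 := by
  subst hd
  have houtput (g : Fin (N - L + 1) → K) {t : ℕ} (ht : t < L) :=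
    shiftCombination_eq_mulVec_add_mulVec hy g (t := t) (by omega)
  simp only [blockHankel_mulVec_eq_iff]
  constructor
  · rintro ⟨x', hx', hy'⟩
    obtain ⟨g, hg⟩ := hx.exists_shiftCombination_eq hL hN hf hfA hAB hu hx'
    refine ⟨g, fun t ht => (hg t ht).1, fun t ht => ?_⟩
    rw [houtput g ht, (hg t ht).1, (hg t ht).2, hy' t ht]
  · rintro ⟨g, hgu, hgy⟩
    refine ⟨shiftCombination g x, fun t ht => ?_, fun t ht => ?_⟩
    · rw [hx.shiftCombination g (by omega) t ht, hgu t (by omega)]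
    · rw [← hgy t ht, houtput g ht, hgu t ht]

end FundamentalLemma

/-- Fundamental Lemma (Willems et al.): for a controllable noise-free LTI system and a
pre-collected trajectory with persistently exciting input of order `L + n_x`, a length-`L`
pair of sequences is an input-output trajectory of the system iff it is in the range of the
stacked Hankel matrices of the pre-collected data. -/
theorem stmt_2 (nx nu ny N L : ℕ) (hL : 1 ≤ L) (hN : L + nx ≤ N)
    (A : Matrix (Fin nx) (Fin nx) ℝ) (B : Matrix (Fin nx) (Fin nu) ℝ)
    (C : Matrix (Fin ny) (Fin nx) ℝ) (D : Matrix (Fin ny) (Fin nu) ℝ)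
    (hctrb : (ctrbMat A B).rank = nx)
    (us : ℕ → Fin nu → ℝ) (ys : ℕ → Fin ny → ℝ) (xs : ℕ → Fin nx → ℝ)
    (hdyn : ∀ t, t + 1 < N → xs (t + 1) = A.mulVec (xs t) + B.mulVec (us t))
    (hout : ∀ t, t < N → ys t = C.mulVec (xs t) + D.mulVec (us t))
    (hpe : persistentlyExciting N (L + nx) us)
    (ub : ℕ → Fin nu → ℝ) (yb : ℕ → Fin ny → ℝ) :
    (∃ xb : ℕ → Fin nx → ℝ,
        (∀ t, t + 1 < L → xb (t + 1) = A.mulVec (xb t) + B.mulVec (ub t)) ∧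
        (∀ t, t < L → yb t = C.mulVec (xb t) + D.mulVec (ub t))) ↔
    (∃ g : Fin (N - L + 1) → ℝ,
        (hankel L (N - L + 1) us).mulVec g = (fun p : Fin L × Fin nu => ub p.1 p.2) ∧
        (hankel L (N - L + 1) ys).mulVec g = (fun p : Fin L × Fin ny => yb p.1 p.2)) :=
  stmt_2_general hL hN A.charpoly_monic (by simp) A.aeval_self_charpoly
    (hctrb.trans (Fintype.card_fin nx).symm) hdyn hout
    (hpe.trans (congrArg (· * (L + nx)) (Fintype.card_fin nu).symm)) ub yb
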